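/- arXiv:2003.05537 — 19 statements merged into one kernel-verified Lean document; each statement's English description precedes it below -/
import Mathlib

section
/- Let I be an n-semiprimary ideal of a commutative ring R. Then the radical √I is a prime ideal of R, and x^n ∈ I for every x ∈ √I (equivalently, x ∈ √I if and only if x^n ∈ I). -/
/-- A proper ideal `I` of a commutative ring `R` is an `n`-semiprimary ideal of `R` if
whenever `x^n * y^n ∈ I` for `x, y ∈ R`, then `x^n ∈ I` or `y^n ∈ I`. -/
def IsNSemiprimary {R : Type*} [CommRing R] (I : Ideal R) (n : ℕ) : Prop :=
  I ≠ ⊤ ∧ ∀ x y : R, x ^ n * y ^ n ∈ I → x ^ n ∈ I ∨ y ^ n ∈ I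

/-- Let `I` be an `n`-semiprimary ideal of a commutative ring `R`. Then `√I` is a prime
ideal of `R`, and `x ∈ √I` if and only if `x^n ∈ I`. -/
theorem radical_isPrime_and_pow_mem_of_isNSemiprimary {R : Type*} [CommRing R]
    (n : ℕ) (hn : 0 < n) (I : Ideal R) (hI : IsNSemiprimary I n) :
    I.radical.IsPrime ∧ ∀ x : R, x ∈ I.radical ↔ x ^ n ∈ I := by
  obtain ⟨hne, h⟩ := hI
  have key : ∀ (x : R) (k : ℕ), (x ^ k) ^ n ∈ I → x ^ n ∈ I := by
    intro x k
    induction k with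
    | zero =>
      intro h1
      simp only [pow_zero, one_pow] at h1
      exact absurd ((Ideal.eq_top_iff_one I).2 h1) hne
    | succ k ih =>
      intro hk
      rw [pow_succ, mul_pow] at hk
      exact (h _ _ hk).elim ih id
  have hiff : ∀ x : R, x ∈ I.radical ↔ x ^ n ∈ I := by
    intro x
    constructor
    · rintro ⟨k, hk⟩
      exact key x k (Ideal.pow_mem_of_mem I hk n hn)
    · intro hx
      exact ⟨n, hx⟩
  refine ⟨⟨?_, ?_⟩, hiff⟩
  · intro ht
    exact hne (Ideal.radical_eq_top.1 ht)
  · intro x y hxy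
    rw [hiff, mul_pow] at hxy
    rw [hiff, hiff]
    exact h x y hxy
end

section
/- Let I be a proper ideal of a commutative ring R such that P = √I is a prime ideal of R and P^n ⊆ I for some positive integer n. Then I is an m-semiprimary ideal of R for every integer m ≥ n. -/
/-- Let `I` be a proper ideal of a commutative ring `R` such that `P = √I` is a prime ideal
of `R` and `P^n ⊆ I` for some positive integer `n`. Then `I` is an `m`-semiprimary ideal of
`R` for every integer `m ≥ n`. -/
theorem isNSemiprimary_of_radical_pow_le {R : Type*} [CommRing R]
    (I : Ideal R) (hI : I ≠ ⊤) (hP : I.radical.IsPrime)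
    (n : ℕ) (hn : 0 < n) (hpow : I.radical ^ n ≤ I)
    (m : ℕ) (hm : n ≤ m) :
    IsNSemiprimary I m := by
  have key : ∀ x : R, x ∈ I.radical → x ^ m ∈ I := fun x hx =>
    hpow (Ideal.pow_le_pow_right hm (Ideal.pow_mem_pow hx m))
  refine ⟨hI, fun x y hxy => ?_⟩
  have h : x * y ∈ I.radical := ⟨m, by rwa [mul_pow]⟩
  exact (hP.mem_or_mem h).imp (key x) (key y)
end

section
/- Let I be a proper ideal of a commutative Noetherian ring R such that √I is a prime ideal of R. Then there is a positive integer n such that I is an m-semiprimary ideal of R for every integer m ≥ n. -/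
/-- Let `I` be a proper ideal of a commutative Noetherian ring `R` such that `√I` is a prime
ideal of `R` (i.e., `I` is semiprimary). Then there is a positive integer `n` such that `I`
is an `m`-semiprimary ideal of `R` for every integer `m ≥ n`. -/
theorem exists_isNSemiprimary_of_radical_isPrime {R : Type*} [CommRing R]
    [IsNoetherianRing R] (I : Ideal R) (hI : I ≠ ⊤) (hP : I.radical.IsPrime) :
    ∃ n : ℕ, 0 < n ∧ ∀ m : ℕ, n ≤ m → IsNSemiprimary I m := by
  obtain ⟨n, hn⟩ := I.exists_radical_pow_le_of_fg I.radical.fg_of_isNoetherianRing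
  have key : ∀ m : ℕ, n + 1 ≤ m → ∀ x ∈ I.radical, x ^ m ∈ I := fun m hm x hx =>
    hn (Ideal.pow_le_pow_right (by omega : n ≤ m) (Ideal.pow_mem_pow hx m))
  refine ⟨n + 1, Nat.succ_pos n, fun m hm => ⟨hI, fun x y hxy => ?_⟩⟩
  rw [← mul_pow] at hxy
  have h : x * y ∈ I.radical := ⟨m, hxy⟩
  exact (hP.mem_or_mem h).imp (key m hm x) (key m hm y)
end

section
/- Let P_1 ⊆ P_2 ⊆ ... ⊆ P_k be prime ideals of a commutative ring R and n_1, ..., n_k positive integers, and suppose the product I = P_1^{n_1} ··· P_k^{n_k} is a proper ideal of R. Then I is an m-semiprimary ideal of R for every integer m ≥ n_1 + ··· + n_k. -/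
/-- Let `P 0 ⊆ P 1 ⊆ ⋯ ⊆ P (k-1)` be prime ideals of a commutative ring `R` and
`e 0, …, e (k-1)` positive integers, and suppose `I = P 0 ^ e 0 ⋯ P (k-1) ^ e (k-1)` is a
proper ideal of `R`. Then `I` is an `m`-semiprimary ideal of `R` for every integer
`m ≥ e 0 + ⋯ + e (k-1)`. -/
theorem isNSemiprimary_of_prod_prime_pows {R : Type*} [CommRing R]
    (k : ℕ) (hk : 0 < k) (P : Fin k → Ideal R) (hPprime : ∀ i, (P i).IsPrime)
    (hPchain : Monotone P) (e : Fin k → ℕ) (he : ∀ i, 0 < e i)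
    (I : Ideal R) (hI : I = ∏ i, P i ^ e i) (hproper : I ≠ ⊤)
    (m : ℕ) (hm : ∑ i, e i ≤ m) :
    IsNSemiprimary I m := by
  subst hI
  refine ⟨hproper, fun x y hxy => ?_⟩
  have key : ∀ z : R, z ∈ P ⟨0, hk⟩ → z ^ m ∈ ∏ i, P i ^ e i := by
    intro z hz
    have h1 : P ⟨0, hk⟩ ^ m ≤ ∏ i, P i ^ e i := by
      refine (Ideal.pow_le_pow_right hm).trans ?_
      rw [← Finset.prod_pow_eq_pow_sum]
      exact Finset.prod_le_prod' fun i _ =>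
        Ideal.pow_right_mono (hPchain (Fin.mk_le_of_le_val (Nat.zero_le _))) _
    exact h1 (Ideal.pow_mem_pow hz m)
  have hle : ∏ i, P i ^ e i ≤ P ⟨0, hk⟩ :=
    (Ideal.prod_le_inf.trans (Finset.inf_le (Finset.mem_univ (⟨0, hk⟩ : Fin k)))).trans
      (Ideal.pow_le_self (he _).ne')
  have hp := hPprime ⟨0, hk⟩
  rcases hp.mem_or_mem (hle hxy) with h | h
  · exact Or.inl (key x (hp.mem_of_pow_mem m h))
  · exact Or.inr (key y (hp.mem_of_pow_mem m h))
end

section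
/- Let I be an n-primary ideal of a commutative ring R. Then I is an n-semiprimary ideal of R. -/
/-- A proper ideal `I` of a commutative ring `R` is an `n`-primary (uniformly primary) ideal
of `R` if whenever `x * y ∈ I` for `x, y ∈ R`, then `x ∈ I` or `y^n ∈ I`. -/
def IsNPrimary {R : Type*} [CommRing R] (I : Ideal R) (n : ℕ) : Prop :=
  I ≠ ⊤ ∧ ∀ x y : R, x * y ∈ I → x ∈ I ∨ y ^ n ∈ I

/-- Let `I` be an `n`-primary ideal of a commutative ring `R`. Then `I` is an
`n`-semiprimary ideal of `R`. -/
theorem isNSemiprimary_of_isNPrimary {R : Type*} [CommRing R]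
    (n : ℕ) (hn : 0 < n) (I : Ideal R) (hI : IsNPrimary I n) :
    IsNSemiprimary I n := by
  obtain ⟨hne, h⟩ := hI
  have key : ∀ (z : R) (m : ℕ), z ^ m ∈ I → z ^ n ∈ I := by
    intro z m
    induction m with
    | zero =>
      intro hz
      rw [pow_zero] at hz
      exact absurd ((Ideal.eq_top_iff_one I).2 hz) hne
    | succ k ih =>
      intro hz
      rw [pow_succ] at hz
      exact (h _ _ hz).elim ih id
  refine ⟨hne, fun x y hxy => ?_⟩
  rcases h _ _ hxy with h1 | h1
  · exact Or.inl h1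
  · rw [← pow_mul] at h1
    exact Or.inr (key y _ h1)
end

section
/- Let I be an n-semiprimary ideal of a commutative ring R. If x^m y^k ∈ I for x, y ∈ R and positive integers m and k, then x^n ∈ I or y^n ∈ I. In particular, if x^m ∈ I for some x ∈ R and positive integer m, then x^n ∈ I. -/
/-- Let `I` be an `n`-semiprimary ideal of a commutative ring `R`. If `x^m * y^k ∈ I` for
`x, y ∈ R` and positive integers `m` and `k`, then `x^n ∈ I` or `y^n ∈ I`. In particular,
if `x^m ∈ I` for some `x ∈ R` and positive integer `m`, then `x^n ∈ I`. -/
theorem pow_mem_of_isNSemiprimary {R : Type*} [CommRing R]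
    (n : ℕ) (hn : 0 < n) (I : Ideal R) (hI : IsNSemiprimary I n) :
    (∀ x y : R, ∀ m k : ℕ, 0 < m → 0 < k → x ^ m * y ^ k ∈ I → x ^ n ∈ I ∨ y ^ n ∈ I) ∧
    (∀ x : R, ∀ m : ℕ, 0 < m → x ^ m ∈ I → x ^ n ∈ I) := by
  have key : ∀ x : R, ∀ m : ℕ, x ^ (n * m) ∈ I → x ^ n ∈ I := by
    intro x m
    induction m with
    | zero =>
      intro h
      have h1 : (1 : R) ∈ I := by simpa using h
      exact absurd ((Ideal.eq_top_iff_one I).2 h1) hI.1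
    | succ j ih =>
      intro h
      have h2 : (x ^ j) ^ n * x ^ n ∈ I := by
        have e : (x ^ j) ^ n * x ^ n = x ^ (n * (j + 1)) := by ring
        rw [e]
        exact h
      rcases hI.2 _ _ h2 with h3 | h3
      · apply ih
        rw [mul_comm n j, pow_mul]
        exact h3
      · exact h3
  have key2 : ∀ x : R, ∀ m : ℕ, (x ^ m) ^ n ∈ I → x ^ n ∈ I := by
    intro x m h
    apply key x m
    rw [mul_comm n m, pow_mul]
    exact h
  refine ⟨?_, ?_⟩
  · intro x y m k _ _ h
    have h2 : (x ^ m) ^ n * (y ^ k) ^ n ∈ I := by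
      rw [← mul_pow]
      exact Ideal.pow_mem_of_mem I h n hn
    exact (hI.2 _ _ h2).imp (key2 x m) (key2 y k)
  · intro x m _ h
    exact key2 x m (Ideal.pow_mem_of_mem I h n hn)
end

section
/- Let I be an n-semiprimary ideal of a commutative ring R. Then I is an m-semiprimary ideal of R for every integer m ≥ n. -/
/-- Let `I` be an `n`-semiprimary ideal of a commutative ring `R`. Then `I` is an
`m`-semiprimary ideal of `R` for every integer `m ≥ n`. -/
theorem isNSemiprimary_of_le {R : Type*} [CommRing R]
    (n : ℕ) (hn : 0 < n) (I : Ideal R) (hI : IsNSemiprimary I n)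
    (m : ℕ) (hm : n ≤ m) :
    IsNSemiprimary I m := by
  obtain ⟨hp, h⟩ := hI
  have key : ∀ (x : R) (k : ℕ), (x ^ k) ^ n ∈ I → x ^ n ∈ I := by
    intro x k
    induction k with
    | zero =>
      intro h1
      exact absurd ((Ideal.eq_top_iff_one I).2 (by simpa using h1)) hp
    | succ k ih =>
      intro h1
      rw [pow_succ, mul_pow] at h1
      rcases h _ _ h1 with h2 | h2
      · exact ih h2
      · exact h2
  refine ⟨hp, fun x y hxy => ?_⟩
  have h1 : (x ^ m) ^ n * (y ^ m) ^ n ∈ I := by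
    rw [← mul_pow]
    exact Ideal.pow_mem_of_mem I hxy n hn
  rcases h _ _ h1 with h2 | h2
  · exact Or.inl (Ideal.pow_mem_of_pow_mem I (key x m h2) hm)
  · exact Or.inr (Ideal.pow_mem_of_pow_mem I (key y m h2) hm)
end

section
/- Let R be a commutative ring of Krull dimension 0 and let I be a proper ideal of R containing the nilradical nil(R). Then for any positive integer n, I is an n-semiprimary ideal of R if and only if I is a prime ideal of R. -/
/-- In a zero-dimensional ring, every `x` satisfies `x ^ k * (1 - x * r) = 0` for some `k, r`. -/
theorem exists_pow_mul_one_sub_eq_zero {R : Type*} [CommRing R]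
    (hdim : ringKrullDim R = 0) (x : R) : ∃ (k : ℕ) (r : R), x ^ k * (1 - x * r) = 0 := by
  have hk : Ring.KrullDimLE 0 R := Ring.krullDimLE_iff.mpr (by simp [hdim])
  by_contra hcon
  push Not at hcon
  let S : Submonoid R :=
    { carrier := {a | ∃ (k : ℕ) (r : R), a = x ^ k * (1 - x * r)}
      one_mem' := ⟨0, 0, by simp⟩
      mul_mem' := by
        rintro _ _ ⟨k, r, rfl⟩ ⟨l, t, rfl⟩
        exact ⟨k + l, r + t - x * r * t, by ring⟩ }
  have hd : Disjoint ((⊥ : Ideal R) : Set R) (S : Set R) := by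
    rw [Set.disjoint_left]
    rintro a ha ⟨k, r, hr⟩
    have ha0 : a = 0 := by simpa using ha
    exact hcon k r (hr ▸ ha0)
  obtain ⟨p, hp, -, hpS⟩ := Ideal.exists_le_prime_disjoint ⊥ S hd
  have hmax : p.IsMaximal := hp.isMaximal'
  rw [Set.disjoint_left] at hpS
  have hx : x ∉ p := fun h => hpS h ⟨1, 0, by simp⟩
  obtain ⟨y, i, hi, hy⟩ := hmax.exists_inv hx
  refine hpS hi ⟨0, y, ?_⟩
  linear_combination hy

/-- Ideals containing the nilradical of a zero-dimensional ring are radical. -/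
theorem mem_of_pow_mem_of_dim_zero {R : Type*} [CommRing R]
    (hdim : ringKrullDim R = 0) (I : Ideal R) (hnil : nilradical R ≤ I)
    (x : R) (n : ℕ) (hx : x ^ n ∈ I) : x ∈ I := by
  obtain ⟨k, r, h⟩ := exists_pow_mul_one_sub_eq_zero hdim x
  have h1 : x * (1 - x * r) ∈ I := by
    refine hnil (mem_nilradical.mpr ⟨k + 1, ?_⟩)
    calc (x * (1 - x * r)) ^ (k + 1)
        = (x ^ k * (1 - x * r)) * (x * (1 - x * r) ^ k) := by rw [mul_pow]; ring
      _ = 0 := by rw [h, zero_mul]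
  have key : ∀ j : ℕ, x - x ^ (j + 1) * r ^ j ∈ I := by
    intro j
    induction j with
    | zero => simp
    | succ j ih =>
      have := I.add_mem ih (I.mul_mem_left (x ^ j * r ^ j) h1)
      convert this using 1
      ring
  have := I.add_mem (key n) (I.mul_mem_left (x * r ^ n) hx)
  convert this using 1
  ring

/-- Let `R` be a commutative ring of Krull dimension `0` and let `I` be a proper ideal of
`R` containing the nilradical `nil(R)`. Then, for any positive integer `n`, `I` is an
`n`-semiprimary ideal of `R` if and only if `I` is a prime ideal of `R`. -/
theorem isNSemiprimary_iff_isPrime_of_dim_zero {R : Type*} [CommRing R]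
    (hdim : ringKrullDim R = 0) (I : Ideal R) (hI : I ≠ ⊤) (hnil : nilradical R ≤ I)
    (n : ℕ) (hn : 0 < n) :
    IsNSemiprimary I n ↔ I.IsPrime := by
  constructor
  · rintro ⟨-, h⟩
    refine ⟨hI, fun {x y} hxy => ?_⟩
    have hxy' : x ^ n * y ^ n ∈ I := by
      rw [← mul_pow]
      exact I.pow_mem_of_mem hxy n hn
    exact (h x y hxy').imp (mem_of_pow_mem_of_dim_zero hdim I hnil x n)
      (mem_of_pow_mem_of_dim_zero hdim I hnil y n)
  · intro h
    exact ⟨hI, fun x y hxy => h.mem_or_mem hxy⟩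
end

section
/- Let I be a nonzero proper ideal of a Dedekind domain R and n a positive integer. Then I is an n-semiprimary ideal of R if and only if I = P^k, where P = √I is a prime ideal of R and k is a positive integer with k ≤ n. -/
/-- Let `I` be a nonzero proper ideal of a Dedekind domain `R` and `n` a positive integer.
Then `I` is an `n`-semiprimary ideal of `R` if and only if `I = P^k`, where `P = √I` is a
prime ideal of `R` and `k` is a positive integer with `k ≤ n`. -/
theorem isNSemiprimary_iff_dedekind {R : Type*} [CommRing R] [IsDedekindDomain R]
    (I : Ideal R) (hI0 : I ≠ ⊥) (hI : I ≠ ⊤) (n : ℕ) (hn : 0 < n) :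
    IsNSemiprimary I n ↔
      I.radical.IsPrime ∧ ∃ k : ℕ, 0 < k ∧ k ≤ n ∧ I = I.radical ^ k := by
  constructor
  · rintro ⟨_, h⟩
    have key : ∀ m : ℕ, ∀ x : R, (x ^ (m + 1)) ^ n ∈ I → x ^ n ∈ I := by
      intro m
      induction m with
      | zero => intro x hx; simpa using hx
      | succ m ih =>
        intro x hx
        rw [pow_succ, mul_pow] at hx
        rcases h _ _ hx with h1 | h1
        · exact ih x h1
        · exact h1
    have hrad : ∀ x ∈ I.radical, x ^ n ∈ I := by
      rintro x ⟨m, hm⟩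
      apply key m
      rw [← pow_mul]
      refine I.pow_mem_of_pow_mem hm ?_
      nlinarith
    have hP : I.radical.IsPrime := by
      refine ⟨fun h => hI (Ideal.radical_eq_top.1 h), ?_⟩
      intro x y hxy
      have h1 := hrad _ hxy
      rw [mul_pow] at h1
      rcases h _ _ h1 with h1 | h1
      · exact Or.inl ⟨n, h1⟩
      · exact Or.inr ⟨n, h1⟩
    refine ⟨hP, ?_⟩
    have hle : I ≤ I.radical := Ideal.le_radical
    generalize hPe : I.radical = P at *
    have hP0 : P ≠ ⊥ := by
      rintro rfl
      exact hI0 (le_bot_iff.1 hle)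
    have hPp : Prime P := Ideal.prime_of_isPrime hP0 hP
    obtain ⟨m, hm⟩ := Ideal.exists_radical_pow_le_of_fg I (IsNoetherian.noetherian _)
    rw [hPe] at hm
    obtain ⟨k, hk, hIk⟩ := (dvd_prime_pow hPp m).1 (Ideal.dvd_iff_le.2 hm)
    have hIk : I = P ^ k := associated_iff_eq.1 hIk
    refine ⟨k, ?_, ?_, hIk⟩
    · rcases Nat.eq_zero_or_pos k with rfl | h0
      · exact absurd (by simpa using hIk) hI
      · exact h0
    · by_contra hnk
      push Not at hnk
      obtain ⟨x, hx1, hx2⟩ := Ideal.exists_mem_pow_notMem_pow_succ P hP0 hP.ne_top 1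
      rw [pow_one] at hx1
      have hx3 : x ^ n ∈ P ^ (n + 1) := by
        have := hrad x hx1
        rw [hIk] at this
        exact Ideal.pow_le_pow_right hnk this
      obtain ⟨J, hJ⟩ := Ideal.dvd_span_singleton.2 hx1
      have h4 := Ideal.dvd_span_singleton.2 hx3
      rw [← Ideal.span_singleton_pow, hJ, mul_pow, pow_succ] at h4
      have h5 : P ∣ J ^ n := (mul_dvd_mul_iff_left (pow_ne_zero n hPp.ne_zero)).1 h4
      have h6 := hPp.dvd_of_dvd_pow h5
      apply hx2
      rw [← Ideal.dvd_span_singleton, hJ, pow_succ, pow_one]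
      exact mul_dvd_mul_left P h6
  · rintro ⟨hP, k, hk0, hkn, hIk⟩
    refine ⟨hI, fun x y hxy => ?_⟩
    have hle : I ≤ I.radical := Ideal.le_radical
    have hpow : ∀ z ∈ I.radical, z ^ n ∈ I := by
      intro z hz
      rw [hIk]
      exact Ideal.pow_le_pow_right hkn (Ideal.pow_mem_pow hz n)
    rcases hP.mem_or_mem (hle hxy) with h | h
    · exact Or.inl (hpow x (hP.mem_of_pow_mem n h))
    · exact Or.inr (hpow y (hP.mem_of_pow_mem n h))
end

section
/- Let R be a Noetherian integral domain. Then R is a Dedekind domain if and only if every ideal I of R which is 2-semiprimary but not prime satisfies I = M^2 for some maximal ideal M of R. -/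
/-- Elements of the radical of a 2-semiprimary ideal have their square in it. -/
theorem IsNSemiprimary.sq_mem_of_pow {R : Type*} [CommRing R] {I : Ideal R}
    (h : IsNSemiprimary I 2) (x : R) (n : ℕ) (hx : (x ^ n) ^ 2 ∈ I) : x ^ 2 ∈ I := by
  induction n with
  | zero => exact absurd ((Ideal.eq_top_iff_one I).mpr (by simpa using hx)) h.1
  | succ n ih =>
    rcases h.2 (x ^ n) x (by rw [← mul_pow, ← pow_succ]; exact hx) with h1 | h1
    · exact ih h1
    · exact h1

theorem IsNSemiprimary.sq_mem {R : Type*} [CommRing R] {I : Ideal R}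
    (h : IsNSemiprimary I 2) (x : R) (hx : x ∈ I.radical) : x ^ 2 ∈ I := by
  obtain ⟨n, hn⟩ := hx
  exact h.sq_mem_of_pow x n (by rw [pow_two]; exact I.mul_mem_left _ hn)

theorem IsNSemiprimary.radical_isPrime {R : Type*} [CommRing R] {I : Ideal R}
    (h : IsNSemiprimary I 2) : I.radical.IsPrime := by
  refine ⟨fun ht => h.1 (Ideal.radical_eq_top.mp ht), fun {x y} hxy => ?_⟩
  have h2 := h.sq_mem _ hxy
  rw [mul_pow] at h2
  exact (h.2 x y h2).imp (fun h => ⟨2, h⟩) (fun h => ⟨2, h⟩)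

theorem isNSemiprimary_two_of_sq_le {R : Type*} [CommRing R] {I P : Ideal R} (hP : P.IsPrime)
    (h1 : P ^ 2 ≤ I) (h2 : I ≤ P) : IsNSemiprimary I 2 := by
  refine ⟨fun h => hP.ne_top (top_le_iff.mp (h ▸ h2)), fun x y hxy => ?_⟩
  rcases hP.mem_or_mem (h2 hxy) with h | h
  · exact Or.inl (h1 (Ideal.pow_mem_pow (hP.mem_of_pow_mem _ h) 2))
  · exact Or.inr (h1 (Ideal.pow_mem_pow (hP.mem_of_pow_mem _ h) 2))

theorem dedekind_forward {R : Type*} [CommRing R] [IsDedekindDomain R] (I : Ideal R)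
    (h : IsNSemiprimary I 2) (hI : ¬ I.IsPrime) : ∃ M : Ideal R, M.IsMaximal ∧ I = M ^ 2 := by
  have hI0 : I ≠ ⊥ := by rintro rfl; exact hI Ideal.isPrime_bot
  have hp := h.radical_isPrime
  have hM0 : I.radical ≠ ⊥ := fun h0 => hI0 (le_bot_iff.mp (h0 ▸ Ideal.le_radical))
  have hMprime : Prime I.radical := Ideal.prime_of_isPrime hM0 hp
  refine ⟨I.radical, hp.isMaximal hM0, ?_⟩
  obtain ⟨k, hk⟩ := I.exists_radical_pow_le_of_fg (IsNoetherian.noetherian _)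
  obtain ⟨i, -, hi⟩ := (dvd_prime_pow hMprime k).mp (Ideal.dvd_iff_le.mpr hk)
  rw [associated_iff_eq] at hi
  have hi0 : i ≠ 0 := by
    rintro rfl
    exact h.1 (by rw [hi, pow_zero, Ideal.one_eq_top])
  have hi1 : i ≠ 1 := by
    rintro rfl
    rw [pow_one] at hi
    exact hI (hi ▸ hp)
  have hi2 : i < 3 := by
    by_contra hi3
    obtain ⟨x, hx, hx2⟩ := Ideal.exists_mem_pow_notMem_pow_succ I.radical hM0 hp.ne_top 1
    rw [pow_one] at hx
    have hsq := Ideal.pow_le_pow_right (I := I.radical) (not_lt.mp hi3) (hi ▸ h.sq_mem x hx)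
    rw [← Ideal.span_singleton_le_iff_mem, ← Ideal.dvd_iff_le] at hx hx2 hsq
    obtain ⟨J, hJ⟩ := hx
    rw [← Ideal.span_singleton_pow, hJ, mul_pow, pow_succ _ 2,
      mul_dvd_mul_iff_left (pow_ne_zero 2 hMprime.ne_zero)] at hsq
    apply hx2
    rw [hJ, pow_succ, pow_one]
    exact mul_dvd_mul_left _ (hMprime.dvd_of_dvd_pow hsq)
  have : i = 2 := by omega
  subst this
  exact hi

theorem dedekind_backward {R : Type*} [CommRing R] [IsDomain R] [IsNoetherianRing R]
    (H : ∀ I : Ideal R, IsNSemiprimary I 2 → ¬ I.IsPrime →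
        ∃ M : Ideal R, M.IsMaximal ∧ I = M ^ 2) : IsDedekindDomain R := by
  have key : ∀ P I : Ideal R, P.IsPrime → P ^ 2 ≤ I → I ≤ P → I ≠ P →
      P.IsMaximal ∧ I = P ^ 2 := by
    intro P I hP h1 h2 hne
    have hnp : ¬ I.IsPrime := fun h => hne (le_antisymm h2 (h.le_of_pow_le h1))
    obtain ⟨M, hM, rfl⟩ := H I (isNSemiprimary_two_of_sq_le hP h1 h2) hnp
    have e : M = P := hM.eq_of_le hP.ne_top (hP.le_of_pow_le h2)
    subst e
    exact ⟨hM, rfl⟩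
  have hne : ∀ P : Ideal R, P ≠ ⊥ → P.IsPrime → P ^ 2 ≠ P := by
    intro P h0 hP h
    rcases (Ideal.isIdempotentElem_iff_eq_bot_or_top P (IsNoetherian.noetherian _)).mp
      (by rw [IsIdempotentElem, ← pow_two, h]) with h | h
    · exact h0 h
    · exact hP.ne_top h
  have : IsDedekindDomainDvr R :=
    { is_dvr_at_nonzero_prime := by
        intro P h0 hP
        obtain ⟨x, hx, hx2⟩ := SetLike.exists_of_lt
          (lt_of_le_of_ne (Ideal.pow_le_self two_ne_zero) (hne P h0 hP))
        have hsup : Ideal.span {x} ⊔ P ^ 2 = P := by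
          by_contra hc
          have := (key P _ hP le_sup_right
            (sup_le ((Ideal.span_singleton_le_iff_mem _).mpr hx)
              (Ideal.pow_le_self two_ne_zero)) hc).2
          exact hx2 (this ▸ Ideal.mem_sup_left (Ideal.mem_span_singleton_self x))
        have hinj : Function.Injective (algebraMap R (Localization.AtPrime P)) :=
          IsLocalization.injective _ P.primeCompl_le_nonZeroDivisors
        have hmap := Localization.AtPrime.map_eq_maximalIdeal (I := P)
        have hnf : ¬ IsField (Localization.AtPrime P) := by
          rw [IsLocalRing.isField_iff_maximalIdeal_eq, ← hmap,
            Ideal.map_eq_bot_iff_of_injective hinj]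
          exact h0
        have : IsNoetherianRing (Localization.AtPrime P) :=
          IsLocalization.isNoetherianRing P.primeCompl _ inferInstance
        refine ((IsDiscreteValuationRing.TFAE _ hnf).out 0 4).mpr ?_
        refine ⟨algebraMap R _ x, le_antisymm ?_ ?_⟩
        · apply Submodule.le_of_le_smul_of_le_jacobson_bot (IsNoetherian.noetherian _)
            (IsLocalRing.jacobson_eq_maximalIdeal _ bot_ne_top).ge
          rw [smul_eq_mul, ← pow_two]
          have e := congrArg (Ideal.map (algebraMap R (Localization.AtPrime P))) hsup
          rw [Ideal.map_sup, Ideal.map_pow, hmap, Ideal.map_span, Set.image_singleton] at e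
          exact e.ge
        · rw [← hmap]
          exact (Ideal.span_singleton_le_iff_mem _).mpr (Ideal.mem_map_of_mem _ hx) }
  infer_instance

/-- Let `R` be a Noetherian integral domain. Then `R` is a Dedekind domain if and only if
every ideal `I` of `R` which is `2`-semiprimary but not prime (i.e., `δ_R(I) = 2`)
satisfies `I = M^2` for some maximal ideal `M` of `R`. -/
theorem isDedekindDomain_iff_two_semiprimary {R : Type*} [CommRing R] [IsDomain R]
    [IsNoetherianRing R] :
    IsDedekindDomain R ↔
      ∀ I : Ideal R, IsNSemiprimary I 2 → ¬ I.IsPrime →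
        ∃ M : Ideal R, M.IsMaximal ∧ I = M ^ 2 := by
  exact ⟨fun _ => dedekind_forward, dedekind_backward⟩
end

section
/- Let I be a proper ideal of a valuation domain R, let P = √I, and let n be a positive integer. Then I is an n-semiprimary ideal of R if and only if P^n ⊆ I. -/
theorem mem_pow_form {R : Type*} [CommRing R] [IsDomain R] [ValuationRing R] (P : Ideal R)
    (k : ℕ) : ∀ z ∈ P ^ k, ∃ x ∈ P, x ^ k ∣ z := by
  induction k with
  | zero => exact fun z _ => ⟨0, P.zero_mem, by simp⟩
  | succ k ih =>
    intro z hz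
    rw [pow_succ] at hz
    refine Submodule.mul_induction_on hz ?_ ?_
    · intro a ha y hy
      obtain ⟨x, hx, hxa⟩ := ih a ha
      rcases ValuationRing.dvd_total x y with h | h
      · exact ⟨x, hx, by rw [pow_succ]; exact mul_dvd_mul hxa h⟩
      · exact ⟨y, hy, by
          rw [pow_succ]; exact mul_dvd_mul ((pow_dvd_pow_of_dvd h k).trans hxa) dvd_rfl⟩
    · rintro a b ⟨x, hx, hxa⟩ ⟨y, hy, hyb⟩
      rcases ValuationRing.dvd_total x y with h | h
      · exact ⟨x, hx, dvd_add hxa ((pow_dvd_pow_of_dvd h _).trans hyb)⟩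
      · exact ⟨y, hy, dvd_add ((pow_dvd_pow_of_dvd h _).trans hxa) hyb⟩

theorem mem_radical_of_dvd {R : Type*} [CommRing R] (I : Ideal R) {x y : R} (h : x ∣ y)
    (hxy : x * y ∈ I.radical) : y ∈ I.radical := by
  have h2 : y ^ 2 ∈ I.radical := by
    rw [pow_two]
    exact Ideal.mem_of_dvd _ (mul_dvd_mul h dvd_rfl) hxy
  exact (Ideal.radical_isRadical I) ⟨2, h2⟩

/-- Let `I` be a proper ideal of a valuation domain `R`, let `P = √I`, and let `n` be a
positive integer. Then `I` is an `n`-semiprimary ideal of `R` if and only if `P^n ⊆ I`. -/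
theorem isNSemiprimary_iff_radical_pow_le_of_valuationRing {R : Type*} [CommRing R]
    [IsDomain R] [ValuationRing R] (I : Ideal R) (hI : I ≠ ⊤) (n : ℕ) (hn : 0 < n) :
    IsNSemiprimary I n ↔ I.radical ^ n ≤ I := by
  constructor
  · rintro ⟨_, h⟩ z hz
    obtain ⟨x, ⟨m, hm⟩, hxz⟩ := mem_pow_form _ n z hz
    refine Ideal.mem_of_dvd _ hxz ?_
    have key : ∀ k : ℕ, x ^ n * (x ^ k) ^ n ∈ I → x ^ n ∈ I := by
      intro k
      induction k with
      | zero => intro hk; simpa using hk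
      | succ k ih =>
        intro hk
        rcases h _ _ hk with h1 | h1
        · exact h1
        · apply ih
          rwa [pow_succ', mul_pow] at h1
    refine key m (I.mul_mem_left _ ?_)
    exact Ideal.pow_mem_of_mem I hm n hn
  · intro h
    refine ⟨hI, fun x y hxy => ?_⟩
    have hr : x * y ∈ I.radical := ⟨n, by rwa [mul_pow]⟩
    rcases ValuationRing.dvd_total x y with hd | hd
    · exact Or.inr (h (Ideal.pow_mem_pow (mem_radical_of_dvd I hd hr) n))
    · rw [mul_comm] at hr
      exact Or.inl (h (Ideal.pow_mem_pow (mem_radical_of_dvd I hd hr) n))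
end

section
/- Let I be a proper ideal of a commutative ring R, let M be an R-module, and let S = IM be the corresponding submodule of M. If I is an n-semiprimary ideal of R, then I (+) S is an (n+1)-semiprimary ideal of the idealization R(+)M. -/
theorem IsNSemiprimary.pow_mem_aux {R : Type*} [CommRing R] {I : Ideal R} {n : ℕ}
    (hI : IsNSemiprimary I n) (a : R) (k : ℕ) (h : (a ^ k) ^ n ∈ I) : a ^ n ∈ I := by
  induction k with
  | zero =>
    exact absurd ((Ideal.eq_top_iff_one I).2 (by simpa using h)) hI.1
  | succ k ih =>
    rw [pow_succ, mul_pow] at h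
    rcases hI.2 _ _ h with h | h
    · exact ih h
    · exact h

/-- Let `I` be a proper ideal of a commutative ring `R`, let `M` be an `R`-module, and let
`S = IM` be the corresponding submodule of `M`. If `I` is an `n`-semiprimary ideal of `R`,
then the ideal `I (+) S = {(a, s) | a ∈ I, s ∈ S}` is an `(n+1)`-semiprimary ideal of the
idealization `R (+) M` (realized as `TrivSqZeroExt R M`). -/
theorem idealization_isNSemiprimary {R M : Type*} [CommRing R] [AddCommGroup M]
    [Module R M] [Module Rᵐᵒᵖ M] [IsCentralScalar R M]
    (n : ℕ) (hn : 0 < n) (I : Ideal R) (S : Submodule R M)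
    (hS : S = I • (⊤ : Submodule R M))
    (J : Ideal (TrivSqZeroExt R M))
    (hJ : ∀ x : TrivSqZeroExt R M, x ∈ J ↔ x.fst ∈ I ∧ x.snd ∈ S)
    (hI : IsNSemiprimary I n) :
    IsNSemiprimary J (n + 1) := by
  have key : ∀ x : TrivSqZeroExt R M, x.fst ^ n ∈ I → x ^ (n + 1) ∈ J := by
    intro x hx
    rw [hJ, TrivSqZeroExt.fst_pow, TrivSqZeroExt.snd_pow, hS]
    refine ⟨?_, ?_⟩
    · rw [pow_succ]
      exact I.mul_mem_right _ hx
    · exact Submodule.smul_of_tower_mem _ _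
        (Submodule.smul_mem_smul hx Submodule.mem_top)
  refine ⟨?_, ?_⟩
  · intro h
    have h1 : (1 : TrivSqZeroExt R M) ∈ J := by rw [h]; exact Submodule.mem_top
    have h2 := ((hJ 1).1 h1).1
    exact hI.1 ((Ideal.eq_top_iff_one I).2 (by simpa using h2))
  · intro x y hxy
    have h := ((hJ _).1 hxy).1
    rw [TrivSqZeroExt.fst_mul, TrivSqZeroExt.fst_pow, TrivSqZeroExt.fst_pow] at h
    have h' : (x.fst ^ (n + 1)) ^ n * (y.fst ^ (n + 1)) ^ n ∈ I := by
      rw [← mul_pow]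
      exact Ideal.pow_mem_of_mem I h n hn
    rcases hI.2 _ _ h' with h | h
    · exact Or.inl (key x (hI.pow_mem_aux _ _ h))
    · exact Or.inr (key y (hI.pow_mem_aux _ _ h))
end

section
/- Let R be a commutative ring of characteristic n ≥ 2, let I be a proper ideal of R, let M be an R-module, and let S be a submodule of M with IM ⊆ S. Then I (+) S is an n-semiprimary ideal of the idealization R(+)M if and only if I is an n-semiprimary ideal of R. -/
/-- Let `R` be a commutative ring of characteristic `n ≥ 2`, let `I` be a proper ideal of
`R`, let `M` be an `R`-module, and let `S` be a submodule of `M` with `IM ⊆ S`. Then the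
ideal `I (+) S = {(a, s) | a ∈ I, s ∈ S}` is an `n`-semiprimary ideal of the idealization
`R (+) M` (realized as `TrivSqZeroExt R M`) if and only if `I` is an `n`-semiprimary ideal
of `R`. -/
theorem idealization_isNSemiprimary_iff {R M : Type*} [CommRing R] [AddCommGroup M]
    [Module R M] [Module Rᵐᵒᵖ M] [IsCentralScalar R M]
    (n : ℕ) (hn : 2 ≤ n) [CharP R n]
    (I : Ideal R) (hproper : I ≠ ⊤) (S : Submodule R M)
    (hS : I • (⊤ : Submodule R M) ≤ S)
    (J : Ideal (TrivSqZeroExt R M))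
    (hJ : ∀ x : TrivSqZeroExt R M, x ∈ J ↔ x.fst ∈ I ∧ x.snd ∈ S) :
    IsNSemiprimary J n ↔ IsNSemiprimary I n := by
  have key : ∀ x : TrivSqZeroExt R M, x ^ n = TrivSqZeroExt.inl (x.fst ^ n) := by
    intro x
    ext
    · simp
    · rw [TrivSqZeroExt.snd_pow, TrivSqZeroExt.snd_inl, ← Nat.cast_smul_eq_nsmul R,
        CharP.cast_eq_zero R n, zero_smul]
  have mem : ∀ a : R, (TrivSqZeroExt.inl a : TrivSqZeroExt R M) ∈ J ↔ a ∈ I := by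
    intro a
    rw [hJ]
    simp
  constructor
  · rintro ⟨-, h⟩
    refine ⟨hproper, fun x y hxy => ?_⟩
    have := h (TrivSqZeroExt.inl x) (TrivSqZeroExt.inl y)
    simp only [key, TrivSqZeroExt.fst_inl, ← TrivSqZeroExt.inl_mul, mem] at this
    exact this hxy
  · rintro ⟨-, h⟩
    refine ⟨fun hT => hproper ?_, fun x y hxy => ?_⟩
    · rw [Ideal.eq_top_iff_one] at hT ⊢
      exact ((hJ 1).1 hT).1
    · simp only [key, ← TrivSqZeroExt.inl_mul, mem] at hxy ⊢
      exact h _ _ hxy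
end

section
/- Let I be a prime ideal of an integral domain R with quotient field K, and let n be a positive integer. Then I is an n-powerful semiprimary ideal of R if and only if I is an n-powerful ideal of R. -/
/-- A proper ideal `I` of an integral domain `R` with quotient field `K` is an `n`-powerful
semiprimary ideal of `R` if whenever `x^n * y^n ∈ I` for `x, y ∈ K`, then `x^n ∈ I` or
`y^n ∈ I` (membership in `I` and `R` is via the embedding `algebraMap R K`). -/
def IsNPowerfulSemiprimary (R K : Type*) [CommRing R] [Field K] [Algebra R K]
    (I : Ideal R) (n : ℕ) : Prop :=
  I ≠ ⊤ ∧ ∀ x y : K, (∃ a ∈ I, algebraMap R K a = x ^ n * y ^ n) →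
    (∃ a ∈ I, algebraMap R K a = x ^ n) ∨ (∃ a ∈ I, algebraMap R K a = y ^ n)

/-- A proper ideal `I` of an integral domain `R` with quotient field `K` is an `n`-powerful
ideal of `R` if whenever `x^n * y^n ∈ I` for `x, y ∈ K`, then `x^n ∈ R` or `y^n ∈ R`. -/
def IsNPowerful (R K : Type*) [CommRing R] [Field K] [Algebra R K]
    (I : Ideal R) (n : ℕ) : Prop :=
  I ≠ ⊤ ∧ ∀ x y : K, (∃ a ∈ I, algebraMap R K a = x ^ n * y ^ n) →
    (∃ r : R, algebraMap R K r = x ^ n) ∨ (∃ r : R, algebraMap R K r = y ^ n)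

/-- Let `I` be a prime ideal of an integral domain `R` with quotient field `K`, and let `n`
be a positive integer. Then `I` is an `n`-powerful semiprimary ideal of `R` if and only if
`I` is an `n`-powerful ideal of `R`. -/
theorem isNPowerfulSemiprimary_iff_isNPowerful {R K : Type*} [CommRing R] [IsDomain R]
    [Field K] [Algebra R K] [IsFractionRing R K]
    (I : Ideal R) (hI : I.IsPrime) (n : ℕ) (hn : 0 < n) :
    IsNPowerfulSemiprimary R K I n ↔ IsNPowerful R K I n := by
  have inj : Function.Injective (algebraMap R K) := IsFractionRing.injective R K
  constructor
  · rintro ⟨h1, h⟩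
    refine ⟨h1, fun x y hxy => ?_⟩
    rcases h x y hxy with ⟨a, _, ha⟩ | ⟨a, _, ha⟩
    · exact Or.inl ⟨a, ha⟩
    · exact Or.inr ⟨a, ha⟩
  · rintro ⟨h1, h⟩
    have key : ∀ x y : K, (∃ a ∈ I, algebraMap R K a = x ^ n * y ^ n) →
        (∃ r : R, algebraMap R K r = x ^ n) →
        (∃ a ∈ I, algebraMap R K a = x ^ n) ∨ (∃ a ∈ I, algebraMap R K a = y ^ n) := by
      rintro x y ⟨a, haI, ha⟩ ⟨r, hr⟩
      by_cases hy : y = 0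
      · exact Or.inr ⟨0, I.zero_mem, by simp [hy, hn.ne']⟩
      have hyn : y ^ n ≠ 0 := pow_ne_zero _ hy
      have h2 : (x / y) ^ n * (y ^ 2) ^ n = x ^ n * y ^ n := by
        rw [div_pow, ← pow_mul, mul_comm 2 n, pow_mul]
        field_simp
      rcases h (x / y) (y ^ 2) ⟨a, haI, ha.trans h2.symm⟩ with ⟨t, ht⟩ | ⟨s, hs⟩
      · left
        refine ⟨r, hI.mem_of_pow_mem 2 ?_, hr⟩
        have : r ^ 2 = a * t := by
          apply inj
          rw [map_pow, map_mul, hr, ha, ht, div_pow]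
          field_simp
        rw [this]
        exact I.mul_mem_right _ haI
      · have hs' : algebraMap R K s = y ^ n * y ^ n := by rw [hs]; ring
        have hrs : r ^ 2 * s = a * a := by
          apply inj
          rw [map_mul, map_pow, map_mul, hr, ha, hs']
          ring
        have hm : r ^ 2 * s ∈ I := by
          rw [hrs]
          exact I.mul_mem_right _ haI
        rcases hI.mem_or_mem hm with h3 | h3
        · exact Or.inl ⟨r, hI.mem_of_pow_mem 2 h3, hr⟩
        · right
          obtain ⟨q, hq⟩ : ∃ q : R, algebraMap R K q = y ^ n := by
            rcases h y y ⟨s, h3, hs'⟩ with h4 | h4 <;> exact h4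
          refine ⟨q, hI.mem_of_pow_mem 2 ?_, hq⟩
          have : q ^ 2 = s := by
            apply inj
            rw [map_pow, hq, hs']
            ring
          rw [this]
          exact h3
    refine ⟨h1, fun x y hxy => ?_⟩
    rcases h x y hxy with hx | hy
    · exact key x y hxy hx
    · refine (key y x ?_ hy).symm
      obtain ⟨a, haI, ha⟩ := hxy
      exact ⟨a, haI, by rw [ha, mul_comm]⟩
end

section
/- Let P ⊆ Q be prime ideals of an integral domain R with quotient field K, and let n be a positive integer. If Q is an n-powerful semiprimary ideal of R, then P is an n-powerful semiprimary ideal of R. -/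
theorem nps_aux {R K : Type*} [CommRing R] [IsDomain R]
    [Field K] [Algebra R K] [IsFractionRing R K]
    (P Q : Ideal R) (hP : P.IsPrime)
    (n : ℕ) (hn : 0 < n) (h : IsNPowerfulSemiprimary R K Q n) (x y : K)
    (p : R) (hp : p ∈ P) (hxy : algebraMap R K p = x ^ n * y ^ n)
    (a : R) (hax : algebraMap R K a = x ^ n) :
    (a ∈ Q) → (∃ a ∈ P, algebraMap R K a = x ^ n) ∨ (∃ a ∈ P, algebraMap R K a = y ^ n) := by
  intro ha
  have inj := IsFractionRing.injective R K
  by_cases hy : y = 0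
  · right
    exact ⟨0, P.zero_mem, by simp [hy, hn.ne']⟩
  have hyn : y ^ n ≠ 0 := pow_ne_zero n hy
  rcases h.2 (x / y) y ⟨a, ha, by rw [hax, div_pow, div_mul_cancel₀ _ hyn]⟩ with
    ⟨q, _, hq⟩ | ⟨b, _, hb⟩
  · left
    refine ⟨a, ?_, hax⟩
    have e : a * a = p * q := by
      apply inj
      rw [map_mul, map_mul, hax, hxy, hq, div_pow]
      field_simp
    have : a * a ∈ P := e ▸ P.mul_mem_right q hp
    exact (hP.mem_or_mem this).elim id id
  · have e : a * b = p := by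
      apply inj
      rw [map_mul, hax, hxy, hb]
    rcases hP.mem_or_mem (e ▸ hp : a * b ∈ P) with h1 | h1
    · exact Or.inl ⟨a, h1, hax⟩
    · exact Or.inr ⟨b, h1, hb⟩

/-- Let `P ⊆ Q` be prime ideals of an integral domain `R` with quotient field `K`, and let
`n` be a positive integer. If `Q` is an `n`-powerful semiprimary ideal of `R`, then `P` is
an `n`-powerful semiprimary ideal of `R`. -/
theorem isNPowerfulSemiprimary_of_le {R K : Type*} [CommRing R] [IsDomain R]
    [Field K] [Algebra R K] [IsFractionRing R K]
    (P Q : Ideal R) (hP : P.IsPrime) (hQ : Q.IsPrime) (hPQ : P ≤ Q)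
    (n : ℕ) (hn : 0 < n) (h : IsNPowerfulSemiprimary R K Q n) :
    IsNPowerfulSemiprimary R K P n := by
  refine ⟨hP.ne_top, ?_⟩
  rintro x y ⟨p, hp, hxy⟩
  rcases h.2 x y ⟨p, hPQ hp, hxy⟩ with ⟨a, ha, hax⟩ | ⟨a, ha, hax⟩
  · exact nps_aux P Q hP n hn h x y p hp hxy a hax ha
  · exact (nps_aux P Q hP n hn h y x p hp (by rw [hxy, mul_comm]) a hax ha).symm
end

section
/- Let R be an n-PVD for some positive integer n. Then R is quasilocal, i.e., R has a unique maximal ideal. -/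
/-- Let `R` be an `n`-PVD for some positive integer `n`, i.e., every prime ideal of `R` is
an `n`-powerful semiprimary ideal of `R`. Then `R` is quasilocal, i.e., `R` has a unique
maximal ideal. -/
theorem nPVD_quasilocal {R K : Type*} [CommRing R] [IsDomain R]
    [Field K] [Algebra R K] [IsFractionRing R K]
    (n : ℕ) (hn : 0 < n)
    (hPVD : ∀ P : Ideal R, P.IsPrime → IsNPowerfulSemiprimary R K P n) :
    ∃! M : Ideal R, M.IsMaximal := by
  have key : ∀ M N : Ideal R, M.IsMaximal → N.IsMaximal → M ≤ N := by
    intro M N hM hN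
    by_contra hMN
    have hNM : ¬ N ≤ M := fun h => hMN (hN.eq_of_le hM.ne_top h).ge
    obtain ⟨x, hxM, hxN⟩ := SetLike.not_le_iff_exists.mp hMN
    obtain ⟨y, hyN, hyM⟩ := SetLike.not_le_iff_exists.mp hNM
    have hy0 : y ≠ 0 := fun h => hyM (h ▸ M.zero_mem)
    have inj := IsFractionRing.injective R K
    have hyK : algebraMap R K y ≠ 0 := fun h => hy0 (inj (by rw [h, map_zero]))
    have hyn : algebraMap R K y ^ n ≠ 0 := pow_ne_zero _ hyK
    rcases (hPVD M hM.isPrime).2 (algebraMap R K x / algebraMap R K y) (algebraMap R K y)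
      ⟨x ^ n, M.pow_mem_of_mem hxM n hn, by
        rw [div_pow, div_mul_cancel₀ _ hyn, map_pow]⟩ with ⟨a, _, ha⟩ | ⟨a, haM, ha⟩
    · rw [div_pow, eq_div_iff hyn, ← map_pow, ← map_pow, ← map_mul] at ha
      have h := inj ha
      exact hxN (hN.isPrime.mem_of_pow_mem n
        (h ▸ N.mul_mem_left a (N.pow_mem_of_mem hyN n hn)))
    · rw [← map_pow] at ha
      have h := inj ha
      exact hyM (hM.isPrime.mem_of_pow_mem n (h ▸ haM))
  obtain ⟨M, hM⟩ := Ideal.exists_maximal R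
  exact ⟨M, hM, fun N hN => le_antisymm (key N M hN hM) (key M N hM hN)⟩
end

section
/- Let R be an n-divided commutative ring for some positive integer n. Then the set of prime ideals of R is linearly ordered by inclusion. -/
/-- A prime ideal `P` of a commutative ring `R` is an `n`-divided prime ideal of `R` if
`x^n` divides `p^n` in `R` for every `x ∈ R \ P` and `p ∈ P`. -/
def IsNDividedPrime {R : Type*} [CommRing R] (P : Ideal R) (n : ℕ) : Prop :=
  P.IsPrime ∧ ∀ x ∉ P, ∀ p ∈ P, x ^ n ∣ p ^ n

/-- Let `R` be an `n`-divided commutative ring for some positive integer `n` (i.e., every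
prime ideal of `R` is an `n`-divided prime ideal of `R`). Then the set of prime ideals
of `R` is linearly ordered by inclusion. -/
theorem primes_linearly_ordered_of_nDivided {R : Type*} [CommRing R]
    (n : ℕ) (hn : 0 < n)
    (h : ∀ P : Ideal R, P.IsPrime → IsNDividedPrime P n) :
    ∀ P Q : Ideal R, P.IsPrime → Q.IsPrime → P ≤ Q ∨ Q ≤ P := by
  intro P Q hP hQ
  by_contra hc
  rw [not_or] at hc
  obtain ⟨x, hxP, hxQ⟩ := SetLike.not_le_iff_exists.mp hc.1
  obtain ⟨y, hyQ, hyP⟩ := SetLike.not_le_iff_exists.mp hc.2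
  have hd : y ^ n ∣ x ^ n := (h P hP).2 y hyP x hxP
  exact hxQ (hQ.mem_of_pow_mem n (Q.mem_of_dvd hd (Q.pow_mem_of_mem hyQ n hn)))
end

section
/- Let P be a prime ideal of an integral domain R with quotient field K, and let n be a positive integer. If P is an n-powerful semiprimary ideal of R, then P is an n-divided prime ideal of R, i.e., x^n divides p^n in R for every x ∈ R \ P and p ∈ P. -/
/-- Let `P` be a prime ideal of an integral domain `R` with quotient field `K`, and let `n`
be a positive integer. If `P` is an `n`-powerful semiprimary ideal of `R`, then `P` is an
`n`-divided prime ideal of `R`, i.e., `x^n` divides `p^n` in `R` for every `x ∈ R \ P` and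
`p ∈ P`. -/
theorem nDivided_of_isNPowerfulSemiprimary {R K : Type*} [CommRing R] [IsDomain R]
    [Field K] [Algebra R K] [IsFractionRing R K]
    (P : Ideal R) (hP : P.IsPrime) (n : ℕ) (hn : 0 < n)
    (h : IsNPowerfulSemiprimary R K P n) :
    ∀ x ∉ P, ∀ p ∈ P, x ^ n ∣ p ^ n := by
  intro x hx p hp
  have hx0 : algebraMap R K x ≠ 0 := by
    intro h0
    have : x = 0 := (IsFractionRing.injective R K) (by rw [h0, map_zero])
    exact hx (this ▸ P.zero_mem)
  have hmul : (algebraMap R K p / algebraMap R K x) ^ n * (algebraMap R K x) ^ n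
      = algebraMap R K (p ^ n) := by
    rw [← mul_pow, div_mul_cancel₀ _ hx0, map_pow]
  rcases h.2 (algebraMap R K p / algebraMap R K x) (algebraMap R K x)
    ⟨p ^ n, P.pow_mem_of_mem hp n hn, hmul.symm⟩ with ⟨a, _, ha⟩ | ⟨a, haP, ha⟩
  · refine ⟨a, (IsFractionRing.injective R K) ?_⟩
    rw [← hmul, ← ha, map_mul, map_pow, mul_comm]
  · have : a = x ^ n := (IsFractionRing.injective R K) (by rw [ha, map_pow])
    exact absurd (hP.mem_of_pow_mem n (this ▸ haP)) hx
end

section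
/- Let P be a prime ideal of an integral domain R with quotient field K, and suppose P is an n-powerful semiprimary ideal of R for a positive integer n. Then (i) P is an mn-powerful semiprimary ideal of R for every positive integer m, and (ii) if x ∈ K satisfies x^m ∈ P for some positive integer m, then x^n ∈ P. -/
/-- Let `P` be a prime ideal of an integral domain `R` with quotient field `K`, and suppose
`P` is an `n`-powerful semiprimary ideal of `R` for a positive integer `n`. Then (i) `P` is
an `mn`-powerful semiprimary ideal of `R` for every positive integer `m`, and (ii) if
`x ∈ K` satisfies `x^m ∈ P` for some positive integer `m`, then `x^n ∈ P`. -/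
theorem isNPowerfulSemiprimary_mul_and_pow_mem {R K : Type*} [CommRing R] [IsDomain R]
    [Field K] [Algebra R K] [IsFractionRing R K]
    (P : Ideal R) (hP : P.IsPrime) (n : ℕ) (hn : 0 < n)
    (h : IsNPowerfulSemiprimary R K P n) :
    (∀ m : ℕ, 0 < m → IsNPowerfulSemiprimary R K P (m * n)) ∧
    (∀ x : K, ∀ m : ℕ, 0 < m → (∃ b ∈ P, algebraMap R K b = x ^ m) →
      ∃ b ∈ P, algebraMap R K b = x ^ n) := by
  obtain ⟨hT, h⟩ := h
  refine ⟨fun m hm => ⟨hT, fun x y hxy => ?_⟩, ?_⟩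
  · have := h (x ^ m) (y ^ m)
    simp only [← pow_mul] at this
    exact this hxy
  · have key : ∀ (x : K) (k : ℕ), (∃ b ∈ P, algebraMap R K b = x ^ ((k + 1) * n)) →
        ∃ b ∈ P, algebraMap R K b = x ^ n := by
      intro x k
      induction k with
      | zero => intro hx; simpa using hx
      | succ k ih =>
        rintro ⟨b, hb, e⟩
        rcases h (x ^ (k + 1)) x ⟨b, hb, by rw [e]; ring⟩ with h1 | h1
        · rw [← pow_mul] at h1
          exact ih h1
        · exact h1
    rintro x m hm ⟨b, hb, e⟩
    obtain ⟨k, rfl⟩ : ∃ k, m = k + 1 := ⟨m - 1, by omega⟩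
    exact key x k ⟨b ^ n, P.pow_mem_of_mem hb n hn, by rw [map_pow, e, ← pow_mul]⟩
end
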